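/- Let α, β ∈ K^sep be distinct, integral over O_K. Set L = K(α), K′ = K(β), and assume L and K′ are linearly disjoint over K, i.e. [LK′:K] = [L:K]·[K′:K]. Let L′ = LK′ = K(α,β) with uniformizer π_{L′}, and set m := ν_{L′}(α − β). By linear disjointness, for each σ ∈ Hom_K(L,K̄) and τ ∈ Hom_K(K′,K̄) there is a unique στ ∈ Hom_K(L′,K̄) restricting to σ on L and to τ on K′. Then for each τ ∈ Hom_K(K′, K̄) there exists σ_τ ∈ Hom_K(L, K̄) such that for every σ ∈ Hom_K(L, K̄) with σ ≠ σ_τ one has ν_{L′}(στ(π_{L′}) − π_{L′}) ≤ ν_{L′}(σ(α) − σ_τ(α)) − m + 1. Moreover, if τ is the inclusion of K′ into K̄, then σ_τ may be taken to be the inclusion of L into K̄. -/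

import Mathlib

open IntermediateField

namespace AddValuation

/-- A sum of elements with pairwise distinct values is at most as divisible as each summand. -/
theorem map_sum_le_of_pairwise_ne {R Γ ι : Type*} [Ring R] [LinearOrderedAddCommMonoidWithTop Γ]
    (w : AddValuation R Γ) {s : Finset ι} {f : ι → R}
    (h : ∀ i ∈ s, ∀ j ∈ s, i ≠ j → w (f i) = w (f j) → w (f i) = ⊤) {i : ι} (hi : i ∈ s) :
    w (∑ j ∈ s, f j) ≤ w (f i) := by
  classical
  obtain ⟨k, hk, hmin⟩ := s.exists_min_image (fun j => w (f j)) ⟨i, hi⟩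
  refine le_trans ?_ (hmin i hi)
  by_cases htop : w (f k) = ⊤
  · rw [htop]
    exact le_top
  · rw [← Finset.add_sum_erase s f hk, map_add_eq_of_lt_left]
    refine map_lt_sum w htop fun j hj => ?_
    obtain ⟨hjk, hj⟩ := Finset.mem_erase.mp hj
    exact lt_of_le_of_ne (hmin j hj) fun he => htop (h k hk j hj hjk.symm he)

/-- The `WithTop ℚ`-valued valuation attached to a rational-valued function on a field that is
multiplicative and ultrametric away from zero. -/
noncomputable def ofRat {F : Type*} [Field F] (v : F → ℚ)
    (hmul : ∀ x y : F, x ≠ 0 → y ≠ 0 → v (x * y) = v x + v y)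
    (hadd : ∀ x y : F, x ≠ 0 → y ≠ 0 → x + y ≠ 0 → min (v x) (v y) ≤ v (x + y)) :
    AddValuation F (WithTop ℚ) := by
  classical
  exact AddValuation.of (fun x => if x = 0 then ⊤ else (v x : WithTop ℚ)) (by simp)
    (by
      have h := hmul 1 1 one_ne_zero one_ne_zero
      rw [mul_one, left_eq_add] at h
      simp [h])
    (by
      intro x y
      by_cases hx : x = 0
      · simp [hx]
      by_cases hy : y = 0
      · simp [hy]
      by_cases hxy : x + y = 0
      · simp [hxy]
      simpa only [hx, hy, hxy, if_false, ← WithTop.coe_min, WithTop.coe_le_coe]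
        using hadd x y hx hy hxy)
    (by
      intro x y
      by_cases hx : x = 0
      · simp [hx]
      by_cases hy : y = 0
      · simp [hy]
      simp [hx, hy, hmul x y hx hy])

theorem ofRat_apply {F : Type*} [Field F] (v : F → ℚ)
    (hmul : ∀ x y : F, x ≠ 0 → y ≠ 0 → v (x * y) = v x + v y)
    (hadd : ∀ x y : F, x ≠ 0 → y ≠ 0 → x + y ≠ 0 → min (v x) (v y) ≤ v (x + y))
    {x : F} (hx : x ≠ 0) : ofRat v hmul hadd x = (v x : WithTop ℚ) := by
  simp [ofRat, hx]

section TotallyRamified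

variable {K E : Type*} [Field K] [Field E] [Algebra K E]

/-- In a totally ramified extension with uniformizer `π`, every element is a combination of
powers of `π` each of whose terms has value at least that of the element. -/
theorem exists_sum_smul_pow (w : AddValuation E (WithTop ℚ))
    (hint : ∀ a : K, a ≠ 0 → ∃ z : ℤ, w (algebraMap K E a) = ((z : ℚ) : WithTop ℚ))
    (hpos : 0 < Module.finrank K E) {π : E}
    (hπ : w π = ((Module.finrank K E : ℚ)⁻¹ : ℚ)) (x : E) :
    ∃ a : Fin (Module.finrank K E) → K, x = ∑ i, a i • π ^ (i : ℕ) ∧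
      ∀ i, w x ≤ w (a i • π ^ (i : ℕ)) := by
  have hpos' : (0 : ℚ) < Module.finrank K E := by exact_mod_cast hpos
  have hval : ∀ (a : K) (_ : a ≠ 0) (i : ℕ), ∃ z : ℤ,
      w (a • π ^ i) = (((z : ℚ) + i * (Module.finrank K E : ℚ)⁻¹ : ℚ) : WithTop ℚ) := by
    intro a ha i
    obtain ⟨z, hz⟩ := hint a ha
    refine ⟨z, ?_⟩
    rw [Algebra.smul_def, map_mul, map_pow, hz, hπ, ← WithTop.coe_nsmul, ← WithTop.coe_add,
      nsmul_eq_mul]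
  have hne : ∀ (a : Fin (Module.finrank K E) → K), ∀ i ∈ Finset.univ, ∀ j ∈ Finset.univ, i ≠ j →
      w (a i • π ^ (i : ℕ)) = w (a j • π ^ (j : ℕ)) → w (a i • π ^ (i : ℕ)) = ⊤ := by
    intro a i _ j _ hij h
    by_contra htop
    have hi : a i ≠ 0 := fun h0 => htop (by simp [h0])
    have hj : a j ≠ 0 := fun h0 => htop (by rw [h]; simp [h0])
    obtain ⟨z, hz⟩ := hval _ hi i
    obtain ⟨z', hz'⟩ := hval _ hj j
    rw [hz, hz', WithTop.coe_inj] at h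
    have h' : (z * Module.finrank K E + (i : ℕ) : ℚ) = z' * Module.finrank K E + (j : ℕ) := by
      field_simp at h
      linarith
    have h'' : z * Module.finrank K E + ((i : ℕ) : ℤ) = z' * Module.finrank K E + ((j : ℕ) : ℤ) := by
      exact_mod_cast h'
    apply hij
    ext
    have hmod := congrArg (· % (Module.finrank K E : ℤ)) h''
    simp only [Int.add_emod, Int.mul_emod_left, zero_add,
      Int.emod_emod] at hmod
    rw [Int.emod_eq_of_lt (by positivity) (by exact_mod_cast i.2),
      Int.emod_eq_of_lt (by positivity) (by exact_mod_cast j.2)] at hmod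
    exact_mod_cast hmod
  have hle := fun (a : Fin (Module.finrank K E) → K) i =>
    map_sum_le_of_pairwise_ne w (hne a) (Finset.mem_univ i)
  have hπ0 : π ≠ 0 := by
    rintro rfl
    simp at hπ
  have hli : LinearIndependent K fun i : Fin (Module.finrank K E) => π ^ (i : ℕ) := by
    rw [Fintype.linearIndependent_iff]
    intro a ha i
    have h := hle a i
    rw [ha, map_zero, top_le_iff, top_iff, smul_eq_zero] at h
    exact h.resolve_right (pow_ne_zero _ hπ0)
  have : Nonempty (Fin (Module.finrank K E)) := ⟨⟨0, hpos⟩⟩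
  have hspan := hli.span_eq_top_of_card_eq_finrank (by simp)
  obtain ⟨a, ha⟩ := (Submodule.mem_span_range_iff_exists_fun K).mp
    (hspan ▸ Submodule.mem_top (x := x))
  exact ⟨a, ha.symm, fun i => ha ▸ hle a i⟩

/-- Two embeddings of a totally ramified extension move every element `x` by at least
`ν(x) - ν(π)` more than they move the uniformizer `π`. -/
theorem add_map_sub_le {F : Type*} [Field F] [Algebra K F] (w : AddValuation F (WithTop ℚ))
    (hint : ∀ a : K, a ≠ 0 → ∃ z : ℤ, w (algebraMap K F a) = ((z : ℚ) : WithTop ℚ))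
    (hpos : 0 < Module.finrank K E) (s t : E →ₐ[K] F) {π : E}
    (hπ : w (t π) = ((Module.finrank K E : ℚ)⁻¹ : ℚ)) (hst : w (s π) = w (t π)) (x : E) :
    w (t x) + w (s π - t π) ≤ w (s x - t x) + w (t π) := by
  obtain ⟨a, hx, ha⟩ := exists_sum_smul_pow (w.comap (t : E →+* F))
    (fun c hc => by
      obtain ⟨z, hz⟩ := hint c hc
      exact ⟨z, (congrArg w (t.commutes c)).trans hz⟩) hpos hπ x
  have hsum : (s x - t x) * t π =
      ∑ i, algebraMap K F (a i) * ((s π ^ (i : ℕ) - t π ^ (i : ℕ)) * t π) := by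
    conv_lhs => rw [hx]
    simp only [map_sum, _root_.map_smul, _root_.map_pow, ← Finset.sum_sub_distrib, Finset.sum_mul,
      ← smul_sub]
    simp only [Algebra.smul_def, mul_assoc]
  rw [← map_mul w (s x - t x), hsum]
  refine map_le_sum w fun i _ => ?_
  have hgeom : (i : ℕ) • w (t π) ≤
      w ((∑ j ∈ Finset.range i, s π ^ j * t π ^ ((i : ℕ) - 1 - j)) * t π) := by
    rw [Finset.sum_mul]
    refine map_le_sum w fun j hj => ?_
    rw [map_mul, map_mul, map_pow, map_pow, hst, ← add_nsmul, ← succ_nsmul]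
    have := Finset.mem_range.mp hj
    rw [show j + ((i : ℕ) - 1 - j) + 1 = i by omega]
  have hterm : w (t x) ≤ w (algebraMap K F (a i)) + (i : ℕ) • w (t π) := by
    have h : w (t x) ≤ w (t (a i • π ^ (i : ℕ))) := ha i
    rwa [map_smul, Algebra.smul_def, _root_.map_pow, map_mul, map_pow] at h
  rw [← (Commute.all (s π) (t π)).geom_sum₂_mul, mul_right_comm, map_mul, map_mul, ← add_assoc]
  gcongr
  exact hterm.trans (by gcongr)

end TotallyRamified

end AddValuation

/-- A Galois-invariant function on an algebraic closure is constant along embeddings of an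
intermediate field. -/
theorem apply_algHom_eq_of_galois_invariant {K F X : Type*} [Field K] [Field F] [Algebra K F]
    [Normal K F] {v : F → X} (hv : ∀ (σ : F ≃ₐ[K] F) (x : F), v (σ x) = v x)
    {E : IntermediateField K F} (s : E →ₐ[K] F) (x : E) : v (s x) = v x := by
  have h : IsConjRoot K (s x) (x : F) :=
    (minpoly.algHom_eq s s.injective x).trans (minpoly.algHom_eq E.val E.val.injective x).symm
  obtain ⟨σ, hσ⟩ := h.exists_algEquiv
  rw [← hσ, hv]

/-- The ramification bound for an embedding `s` of a totally ramified extension `E` of degree `n`: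
with `π` a uniformizer, `n ν(sπ - π) ≤ n ν(sx - x) - n ν(x) + 1` as soon as `s` moves `x`. -/
theorem finrank_mul_sub_le {K F : Type*} [Field K] [Field F] [Algebra K F] [Normal K F]
    {v : F → ℚ}
    (hv_mul : ∀ x y : F, x ≠ 0 → y ≠ 0 → v (x * y) = v x + v y)
    (hv_add : ∀ x y : F, x ≠ 0 → y ≠ 0 → x + y ≠ 0 → min (v x) (v y) ≤ v (x + y))
    (hv_gal : ∀ (σ : F ≃ₐ[K] F) (x : F), v (σ x) = v x)
    (hv_int : ∀ x : K, x ≠ 0 → ∃ n : ℤ, v (algebraMap K F x) = (n : ℚ))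
    {E : IntermediateField K F} {π : E} (hπ : (Module.finrank K E : ℚ) * v π = 1)
    (s : E →ₐ[K] F) {x : E} (hx : x ≠ 0) (hsx : s x ≠ x) :
    (Module.finrank K E : ℚ) * v (s π - π) ≤
      (Module.finrank K E : ℚ) * v (s x - x) - (Module.finrank K E : ℚ) * v x + 1 := by
  have hn : (Module.finrank K E : ℚ) ≠ 0 := left_ne_zero_of_mul_eq_one hπ
  have hpos : 0 < Module.finrank K E := Nat.pos_of_ne_zero (by exact_mod_cast hn)
  have hpos' : (0 : ℚ) < Module.finrank K E := by exact_mod_cast hpos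
  have hx' : (x : F) ≠ 0 := by simpa using hx
  have hsx0 : s x ≠ 0 := by simpa using hx
  have hsub : s x - x ≠ 0 := sub_ne_zero.mpr hsx
  set w := AddValuation.ofRat v hv_mul hv_add
  have hwv : ∀ {y : F}, y ≠ 0 → w y = v y := AddValuation.ofRat_apply v hv_mul hv_add
  by_cases hπ0 : π = 0
  · subst hπ0
    have hle := w.map_sub (s x) x
    rw [hwv hx', hwv hsx0, hwv hsub, apply_algHom_eq_of_galois_invariant hv_gal, min_self,
      WithTop.coe_le_coe] at hle
    have := mul_le_mul_of_nonneg_left hle hpos'.le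
    simp only [map_zero, ZeroMemClass.coe_zero, sub_zero] at hπ ⊢
    linarith
  · have hπ0' : (π : F) ≠ 0 := by simpa using hπ0
    have hsπ0 : s π ≠ 0 := by simpa using hπ0
    have hle := AddValuation.add_map_sub_le w
      (fun a ha => by
        obtain ⟨z, hz⟩ := hv_int a ha
        exact ⟨z, by rw [hwv (by simpa using ha), hz]⟩) hpos s E.val (π := π)
      (by
        rw [IntermediateField.coe_val, hwv hπ0', eq_inv_of_mul_eq_one_right hπ])
      (by
        rw [IntermediateField.coe_val, hwv hπ0', hwv hsπ0,
          apply_algHom_eq_of_galois_invariant hv_gal]) x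
    simp only [IntermediateField.coe_val] at hle
    by_cases hsπ : s π - π = 0
    · rw [hsπ, hwv hsub, hwv hπ0', w.map_zero, add_top, ← WithTop.coe_add, top_le_iff] at hle
      exact absurd hle WithTop.coe_ne_top
    · rw [hwv hx', hwv hsπ, hwv hsub, hwv hπ0', ← WithTop.coe_add, ← WithTop.coe_add,
        WithTop.coe_le_coe] at hle
      have := mul_le_mul_of_nonneg_left hle hpos'.le
      linarith

/-- Let `K` be a field, Henselian with respect to a discrete valuation
`ν_K` with algebraically closed residue field, with fixed algebraic closure `Kbar` and
(unique, Galois-invariant) extension `v` of `ν_K`, normalized so that a uniformizer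
`πK` satisfies `v πK = 1` and `v` is `ℤ`-valued on `K`; algebraic closedness of the
residue field is expressed by `hv_res`.

Let `α, β ∈ K^sep` be distinct, integral over `O_K`.  Set `L = K(α)`, `K′ = K(β)`,
and assume `L` and `K′` are linearly disjoint over `K`, i.e.
`[LK′:K] = [L:K]·[K′:K]`.  Let `L′ = LK′ = K(α,β)` with uniformizer `π_{L′}`
(`ν_{L′} = [L′:K]·ν`), and set `m := ν_{L′}(α − β)`.  By linear disjointness, each
`s ∈ Hom_K(L′,Kbar)` is determined by the pair `(σ, τ) = (s|_L, s|_{K′})`, and every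
pair arises; `στ` denotes the element with restrictions `σ` and `τ`.  Then for each
`τ ∈ Hom_K(K′, Kbar)` there exists `σ_τ ∈ Hom_K(L, Kbar)` such that for every
`σ ∈ Hom_K(L, Kbar)` with `σ ≠ σ_τ` one has
`ν_{L′}(στ(π_{L′}) − π_{L′}) ≤ ν_{L′}(σ(α) − σ_τ(α)) − m + 1`.
Moreover, if `τ` is the inclusion of `K′` into `Kbar`, then `σ_τ` may be taken to be
the inclusion of `L` into `Kbar`. -/
theorem exists_sigma_tau_bound
    {K Kbar : Type*} [Field K] [Field Kbar] [Algebra K Kbar] [IsAlgClosure K Kbar]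
    (v : Kbar → ℚ)
    (hv_mul : ∀ x y : Kbar, x ≠ 0 → y ≠ 0 → v (x * y) = v x + v y)
    (hv_add : ∀ x y : Kbar, x ≠ 0 → y ≠ 0 → x + y ≠ 0 → min (v x) (v y) ≤ v (x + y))
    (hv_gal : ∀ (σ : Kbar ≃ₐ[K] Kbar) (x : Kbar), v (σ x) = v x)
    (hv_int : ∀ x : K, x ≠ 0 → ∃ n : ℤ, v (algebraMap K Kbar x) = (n : ℚ))
    (πK : K) (hπK : πK ≠ 0 ∧ v (algebraMap K Kbar πK) = 1)
    (hv_res : ∀ x : Kbar, x ≠ 0 → 0 ≤ v x →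
      ∃ η : K, x = algebraMap K Kbar η ∨ 0 < v (x - algebraMap K Kbar η))
    (α β : Kbar) (hαβ : α ≠ β)
    (hsepα : (minpoly K α).Separable) (hsepβ : (minpoly K β).Separable)
    (hintα : α = 0 ∨ 0 ≤ v α) (hintβ : β = 0 ∨ 0 ≤ v β)
    (h1 : IntermediateField.adjoin K ({α} : Set Kbar)
        ≤ IntermediateField.adjoin K ({α, β} : Set Kbar))
    (h2 : IntermediateField.adjoin K ({β} : Set Kbar)
        ≤ IntermediateField.adjoin K ({α, β} : Set Kbar))
    (hdisj : Module.finrank K ↥(IntermediateField.adjoin K ({α, β} : Set Kbar)) =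
      Module.finrank K ↥(IntermediateField.adjoin K ({α} : Set Kbar)) *
      Module.finrank K ↥(IntermediateField.adjoin K ({β} : Set Kbar)))
    (πL' : ↥(IntermediateField.adjoin K ({α, β} : Set Kbar)))
    (hπL' : (Module.finrank K ↥(IntermediateField.adjoin K ({α, β} : Set Kbar)) : ℚ)
        * v (πL' : Kbar) = 1)
    (m : ℚ)
    (hm : m = (Module.finrank K ↥(IntermediateField.adjoin K ({α, β} : Set Kbar)) : ℚ)
        * v (α - β)) :
    (∀ τ : ↥(IntermediateField.adjoin K ({β} : Set Kbar)) →ₐ[K] Kbar,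
      ∃ στ : ↥(IntermediateField.adjoin K ({α} : Set Kbar)) →ₐ[K] Kbar,
        ∀ s : ↥(IntermediateField.adjoin K ({α, β} : Set Kbar)) →ₐ[K] Kbar,
          s.comp (IntermediateField.inclusion h2) = τ →
          s.comp (IntermediateField.inclusion h1) ≠ στ →
          (Module.finrank K ↥(IntermediateField.adjoin K ({α, β} : Set Kbar)) : ℚ)
              * v (s πL' - (πL' : Kbar))
            ≤ (Module.finrank K ↥(IntermediateField.adjoin K ({α, β} : Set Kbar)) : ℚ)
              * v ((s.comp (IntermediateField.inclusion h1))
                    (IntermediateField.AdjoinSimple.gen K α)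
                  - στ (IntermediateField.AdjoinSimple.gen K α)) - m + 1) ∧
    (∀ s : ↥(IntermediateField.adjoin K ({α, β} : Set Kbar)) →ₐ[K] Kbar,
      s.comp (IntermediateField.inclusion h2)
          = (IntermediateField.adjoin K ({β} : Set Kbar)).val →
      s.comp (IntermediateField.inclusion h1)
          ≠ (IntermediateField.adjoin K ({α} : Set Kbar)).val →
      (Module.finrank K ↥(IntermediateField.adjoin K ({α, β} : Set Kbar)) : ℚ)
          * v (s πL' - (πL' : Kbar))
        ≤ (Module.finrank K ↥(IntermediateField.adjoin K ({α, β} : Set Kbar)) : ℚ)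
          * v ((s.comp (IntermediateField.inclusion h1))
                (IntermediateField.AdjoinSimple.gen K α)
              - (IntermediateField.adjoin K ({α} : Set Kbar)).val
                  (IntermediateField.AdjoinSimple.gen K α)) - m + 1) := by
  have hL' : (Module.finrank K ↥(IntermediateField.adjoin K ({α, β} : Set Kbar)) : ℚ) ≠ 0 :=
    left_ne_zero_of_mul_eq_one hπL'
  have hpos : (0 : ℚ) < Module.finrank K ↥(IntermediateField.adjoin K ({α, β} : Set Kbar)) :=
    lt_of_le_of_ne (Nat.cast_nonneg _) hL'.symm
  have hbound : ∀ s : ↥(IntermediateField.adjoin K ({α, β} : Set Kbar)) →ₐ[K] Kbar,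
      (s.comp (IntermediateField.inclusion h1)) (IntermediateField.AdjoinSimple.gen K α) ≠
        α - β + (s.comp (IntermediateField.inclusion h2))
          (IntermediateField.AdjoinSimple.gen K β) →
      (Module.finrank K ↥(IntermediateField.adjoin K ({α, β} : Set Kbar)) : ℚ)
          * v (s πL' - (πL' : Kbar))
        ≤ (Module.finrank K ↥(IntermediateField.adjoin K ({α, β} : Set Kbar)) : ℚ)
          * v ((s.comp (IntermediateField.inclusion h1)) (IntermediateField.AdjoinSimple.gen K α)
            - (α - β + (s.comp (IntermediateField.inclusion h2))
              (IntermediateField.AdjoinSimple.gen K β))) - m + 1 := by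
    intro s hs
    set x := IntermediateField.inclusion h1 (IntermediateField.AdjoinSimple.gen K α) -
      IntermediateField.inclusion h2 (IntermediateField.AdjoinSimple.gen K β) with hx
    have hxv : (x : Kbar) = α - β := by simp [hx]
    have hsx : s x - x = (s.comp (IntermediateField.inclusion h1))
        (IntermediateField.AdjoinSimple.gen K α) -
        (α - β + (s.comp (IntermediateField.inclusion h2))
          (IntermediateField.AdjoinSimple.gen K β)) := by
      rw [hxv, hx, map_sub]
      simp only [AlgHom.comp_apply]
      ring
    rw [hm, ← hsx, ← hxv]
    refine finrank_mul_sub_le hv_mul hv_add hv_gal hv_int hπL' s ?_ ?_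
    · intro h0
      rw [h0] at hxv
      exact sub_ne_zero.mpr hαβ hxv.symm
    · rwa [← sub_ne_zero, hsx, sub_ne_zero]
  have hext : ∀ σ σ' : ↥(IntermediateField.adjoin K ({α} : Set Kbar)) →ₐ[K] Kbar,
      σ (IntermediateField.AdjoinSimple.gen K α) = σ' (IntermediateField.AdjoinSimple.gen K α) →
      σ = σ' := fun σ σ' h =>
    (IntermediateField.adjoin.powerBasis
      (Algebra.IsIntegral.isIntegral (R := K) α)).algHom_ext (by simpa using h)
  constructor
  · intro τ
    have : FiniteDimensional K ↥(IntermediateField.adjoin K ({α} : Set Kbar)) :=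
      IntermediateField.adjoin.finiteDimensional (Algebra.IsIntegral.isIntegral α)
    set w := AddValuation.ofRat v hv_mul hv_add
    have hwv : ∀ {y : Kbar}, y ≠ 0 → w y = v y := AddValuation.ofRat_apply v hv_mul hv_add
    have : Nonempty (↥(IntermediateField.adjoin K ({α} : Set Kbar)) →ₐ[K] Kbar) :=
      ⟨IntermediateField.val _⟩
    obtain ⟨στ, hστ⟩ := Finite.exists_max
      fun σ : ↥(IntermediateField.adjoin K ({α} : Set Kbar)) →ₐ[K] Kbar =>
        w (σ (IntermediateField.AdjoinSimple.gen K α) -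
          (α - β + τ (IntermediateField.AdjoinSimple.gen K β)))
    refine ⟨στ, ?_⟩
    rintro s rfl hne
    have hσ := hστ (s.comp (IntermediateField.inclusion h1))
    have hne' := mt (hext _ _) hne
    have hc : (s.comp (IntermediateField.inclusion h1)) (IntermediateField.AdjoinSimple.gen K α) ≠
        α - β + (s.comp (IntermediateField.inclusion h2))
          (IntermediateField.AdjoinSimple.gen K β) := by
      intro h
      rw [← sub_eq_zero, ← w.top_iff] at h
      rw [h, top_le_iff, w.top_iff, sub_eq_zero] at hσ
      rw [w.top_iff, sub_eq_zero] at h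
      exact hne' (h.trans hσ.symm)
    refine (hbound s hc).trans ?_
    have hle := w.map_le_sub le_rfl hσ
    rw [sub_sub_sub_cancel_right, hwv (sub_ne_zero.mpr hc), hwv (sub_ne_zero.mpr hne'),
      WithTop.coe_le_coe] at hle
    have := mul_le_mul_of_nonneg_left hle hpos.le
    linarith
  · intro s hs2 hs1
    have hne := mt (hext _ _) hs1
    have h := hbound s
    have hc : α - β + (IntermediateField.adjoin K ({β} : Set Kbar)).val
          (IntermediateField.AdjoinSimple.gen K β) =
        (IntermediateField.adjoin K ({α} : Set Kbar)).val
          (IntermediateField.AdjoinSimple.gen K α) := by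
      simp
    rw [hs2, hc] at h
    exact h hne
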